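/- arXiv:math/0503560 — 2 statements merged into one kernel-verified Lean document; each statement's English description precedes it below -/
import Mathlib

section
/- Let ω₀ ∈ ℝ with sin(ω₀) ≠ 0 and cos(ω₀) ≠ 0. Let I ⊆ ℝ be a preconnected open set and α : ℝ → ℝ differentiable on I such that for all v ∈ I: cos(α(v)) ≠ 0, cos(α(v)) ≠ 1, sin(α(v)) ≠ 0, tan(α(v)/2) ≠ 0, and α'(v) = (cos(ω₀)/sin(ω₀))·sin(α(v))·(cos(α(v)) − 1)/cos(α(v)). Then the function v ↦ (1/2)·tan(ω₀)·(1/(1 − cos(α(v))) + log|tan(α(v)/2)|) − v is constant on I. -/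
open Real

/-!
The trajectory equation is separable: `dv = tan ω₀ · cos α / (sin α · (cos α - 1)) dα`.
The right-hand side integrates to `1 / 2 · tan ω₀ · (1 / (1 - cos α) + log |tan (α / 2)|)`,
by the decomposition
`-2 cos α / (sin α · (1 - cos α)) = 1 / sin α - sin α / (1 - cos α) ^ 2`.
-/

lemma one_sub_cos_ne_zero_of_sin_ne_zero {x : ℝ} (hsin : sin x ≠ 0) : 1 - cos x ≠ 0 :=
  fun h ↦ hsin (sin_eq_zero_iff_cos_eq.mpr (.inl (sub_eq_zero.mp h).symm))

lemma hasDerivAt_log_abs_tan_half {x : ℝ} (hsin : sin x ≠ 0) :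
    HasDerivAt (fun y ↦ log |tan (y / 2)|) (1 / sin x) x := by
  have hdouble : sin x = 2 * sin (x / 2) * cos (x / 2) := by
    rw [← sin_two_mul, mul_div_cancel₀ x two_ne_zero]
  have hsin_half : sin (x / 2) ≠ 0 := fun h ↦ hsin (by simp [hdouble, h])
  have hcos_half : cos (x / 2) ≠ 0 := fun h ↦ hsin (by simp [hdouble, h])
  have htan_half : tan (x / 2) ≠ 0 := by
    rw [tan_eq_sin_div_cos]
    exact div_ne_zero hsin_half hcos_half
  have hderiv_half : HasDerivAt (fun y : ℝ ↦ y / 2) (1 / 2) x := (hasDerivAt_id' x).div_const 2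
  have hderiv_tan : HasDerivAt (fun y ↦ tan (y / 2)) (1 / cos (x / 2) ^ 2 * (1 / 2)) x :=
    HasDerivAt.comp (h₂ := tan) x (hasDerivAt_tan hcos_half) hderiv_half
  simp only [log_abs]
  refine (hderiv_tan.log htan_half).congr_deriv ?_
  rw [tan_eq_sin_div_cos, hdouble]
  field_simp

lemma hasDerivAt_one_div_one_sub_cos {x : ℝ} (hcos : 1 - cos x ≠ 0) :
    HasDerivAt (fun y ↦ 1 / (1 - cos y)) (-sin x / (1 - cos x) ^ 2) x := by
  simpa using ((hasDerivAt_cos x).const_sub 1).fun_inv hcos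

lemma hasDerivAt_one_div_one_sub_cos_add_log_abs_tan_half {x : ℝ} (hsin : sin x ≠ 0) :
    HasDerivAt (fun y ↦ 1 / (1 - cos y) + log |tan (y / 2)|)
      (-2 * cos x / (sin x * (1 - cos x))) x := by
  have hcos := one_sub_cos_ne_zero_of_sin_ne_zero hsin
  refine ((hasDerivAt_one_div_one_sub_cos hcos).add
    (hasDerivAt_log_abs_tan_half hsin)).congr_deriv ?_
  field_simp
  linear_combination -sin_sq_add_cos_sq x

lemma hasDerivWithinAt_first_integral_of_trajectory {k v : ℝ} {I : Set ℝ} {α : ℝ → ℝ}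
    (hcos : cos (α v) ≠ 0) (hsin : sin (α v) ≠ 0)
    (hα : HasDerivWithinAt α (k * sin (α v) * (cos (α v) - 1) / cos (α v)) I v) :
    HasDerivWithinAt (fun w ↦ 1 / (1 - cos (α w)) + log |tan (α w / 2)|) (2 * k) I v := by
  have hcos_sub := one_sub_cos_ne_zero_of_sin_ne_zero hsin
  refine ((hasDerivAt_one_div_one_sub_cos_add_log_abs_tan_half hsin).comp_hasDerivWithinAt
    v hα).congr_deriv ?_
  field_simp
  ring

lemma exists_forall_eq_of_hasDerivWithinAt_zero {E : Type*} [NormedAddCommGroup E]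
    [NormedSpace ℝ E] {f : ℝ → E} {I : Set ℝ} (hI : IsPreconnected I)
    (hf : ∀ x ∈ I, HasDerivWithinAt f 0 I x) : ∃ c, ∀ x ∈ I, f x = c := by
  obtain rfl | ⟨x₀, hx₀⟩ := I.eq_empty_or_nonempty
  · exact ⟨0, by simp⟩
  refine ⟨f x₀, fun x hx ↦ sub_eq_zero.mp (norm_le_zero_iff.mp ?_)⟩
  simpa using hI.convex.norm_image_sub_le_of_norm_hasDerivWithin_le hf
    (fun _ _ ↦ norm_zero.le) hx₀ hx

theorem trajectory_first_integral_a_eq_zero_general {ω₀ : ℝ} (hsinω : sin ω₀ ≠ 0)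
    (hcosω : cos ω₀ ≠ 0) {I : Set ℝ} (hI : IsPreconnected I) {α : ℝ → ℝ}
    (hcos : ∀ v ∈ I, cos (α v) ≠ 0) (hsin : ∀ v ∈ I, sin (α v) ≠ 0)
    (hα : ∀ v ∈ I, HasDerivWithinAt α
      (cos ω₀ / sin ω₀ * sin (α v) * (cos (α v) - 1) / cos (α v)) I v) :
    ∃ c : ℝ, ∀ v ∈ I,
      1 / 2 * tan ω₀ * (1 / (1 - cos (α v)) + log |tan (α v / 2)|) - v = c := by
  refine exists_forall_eq_of_hasDerivWithinAt_zero hI fun v hv ↦ ?_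
  have hF := hasDerivWithinAt_first_integral_of_trajectory (hcos v hv) (hsin v hv) (hα v hv)
  have hspeed : 1 / 2 * tan ω₀ * (2 * (cos ω₀ / sin ω₀)) - 1 = 0 := by
    rw [tan_eq_sin_div_cos]
    field_simp
    ring
  exact ((hF.const_mul (1 / 2 * tan ω₀)).sub (hasDerivWithinAt_id v I)).congr_deriv hspeed

/-- First integral of the trajectory equation for `a = 0`: along a solution of
`α' = (cos ω₀ / sin ω₀) · sin α · (cos α - 1)/cos α`, the function
`v ↦ (1/2)·tan ω₀·(1/(1 - cos α) + log |tan(α/2)|) - v` is constant. -/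
theorem trajectory_first_integral_a_eq_zero
    (ω₀ : ℝ) (hsinω : Real.sin ω₀ ≠ 0) (hcosω : Real.cos ω₀ ≠ 0)
    (I : Set ℝ) (hIopen : IsOpen I) (hIconn : IsPreconnected I)
    (α : ℝ → ℝ)
    (hdiff : ∀ v ∈ I, DifferentiableAt ℝ α v)
    (hcos : ∀ v ∈ I, Real.cos (α v) ≠ 0)
    (hcos1 : ∀ v ∈ I, Real.cos (α v) ≠ 1)
    (hsin : ∀ v ∈ I, Real.sin (α v) ≠ 0)
    (htan : ∀ v ∈ I, Real.tan (α v / 2) ≠ 0)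
    (hode : ∀ v ∈ I, deriv α v =
      (Real.cos ω₀ / Real.sin ω₀) * Real.sin (α v) *
        (Real.cos (α v) - 1) / Real.cos (α v)) :
    ∃ c : ℝ, ∀ v ∈ I,
      (1 / 2) * Real.tan ω₀ *
          (1 / (1 - Real.cos (α v)) + Real.log |Real.tan (α v / 2)|) - v = c :=
  trajectory_first_integral_a_eq_zero_general hsinω hcosω hIconn hcos hsin fun v hv ↦
    hode v hv ▸ (hdiff v hv).hasDerivAt.hasDerivWithinAt
end

section
/- Let a, ω₀ ∈ ℝ and let α : ℝ → ℝ be differentiable. Define ω(v) = a·v + ω₀ and k(u,v) = tan(α(u)/2)·sin(ω(v)). Suppose at a point (u,v) we have cos(α(u)) ≠ 0, sin(α(u)) ≠ 0, cos(α(u)/2) ≠ 0, and α'(u) = 1 − (a+1)/cos(α(u)). Then cos(ω(v))·∂k/∂u(u,v) + (sin(ω(v))/sin(α(u)))·∂k/∂v(u,v) = ((a+1)·cos(ω(v))·sin(ω(v))/(2·cos²(α(u)/2)))·(1 − 1/cos(α(u))). -/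
open Real

lemma sin_eq_two_mul_sin_half_mul_cos_half (x : ℝ) : sin x = 2 * sin (x / 2) * cos (x / 2) := by
  rw [← sin_two_mul, mul_div_cancel₀ x two_ne_zero]

lemma sin_half_ne_zero {x : ℝ} (hx : sin x ≠ 0) : sin (x / 2) ≠ 0 := fun h =>
  hx (by simp [sin_eq_two_mul_sin_half_mul_cos_half x, h])

lemma cos_half_ne_zero {x : ℝ} (hx : sin x ≠ 0) : cos (x / 2) ≠ 0 := fun h =>
  hx (by simp [sin_eq_two_mul_sin_half_mul_cos_half x, h])

lemma tan_half_div_sin {x : ℝ} (hx : sin x ≠ 0) :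
    tan (x / 2) / sin x = 1 / (2 * cos (x / 2) ^ 2) := by
  have hsin := sin_half_ne_zero hx
  rw [sin_eq_two_mul_sin_half_mul_cos_half x, tan_eq_sin_div_cos]
  field_simp

lemma hasDerivAt_tan_half {f : ℝ → ℝ} {f' x : ℝ} (hf : HasDerivAt f f' x)
    (hcos : cos (f x / 2) ≠ 0) :
    HasDerivAt (fun y => tan (f y / 2)) (f' / (2 * cos (f x / 2) ^ 2)) x := by
  have hcomp : HasDerivAt (fun y => tan (f y / 2)) (1 / cos (f x / 2) ^ 2 * (f' / 2)) x :=
    HasDerivAt.comp (h := fun y => f y / 2) x (hasDerivAt_tan hcos) (hf.div_const 2)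
  exact hcomp.congr_deriv (by ring)

-- The `u`-derivative of `tan (α / 2)` and the quotient `tan (α / 2) / sin α` coming from the `∂_v`
-- component of `ξ` share the factor `1 / (2 cos² (α / 2))`, so `α'` and `ω'` add up. On the
-- meridian equation with `ω' = a`, the sum is `α' + a = (a + 1) (1 - 1 / cos α)`.
theorem xi_derivative_of_geodesic_curvature_general {α ω : ℝ → ℝ} {α' ω' u v : ℝ}
    (hα : HasDerivAt α α' u) (hω : HasDerivAt ω ω' v) (hsin : sin (α u) ≠ 0) :
    cos (ω v) * deriv (fun u' => tan (α u' / 2) * sin (ω v)) u +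
      sin (ω v) / sin (α u) * deriv (fun v' => tan (α u / 2) * sin (ω v')) v =
      (α' + ω') * cos (ω v) * sin (ω v) / (2 * cos (α u / 2) ^ 2) := by
  have hu : HasDerivAt (fun u' => tan (α u' / 2) * sin (ω v))
      (α' / (2 * cos (α u / 2) ^ 2) * sin (ω v)) u :=
    (hasDerivAt_tan_half hα (cos_half_ne_zero hsin)).mul_const _
  have hv : HasDerivAt (fun v' => tan (α u / 2) * sin (ω v'))
      (tan (α u / 2) * (cos (ω v) * ω')) v :=
    hω.sin.const_mul _
  calc
    _ = cos (ω v) * sin (ω v) *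
        (α' / (2 * cos (α u / 2) ^ 2) + ω' * (tan (α u / 2) / sin (α u))) := by
      rw [hu.deriv, hv.deriv]
      ring
    _ = _ := by
      rw [tan_half_div_sin hsin]
      ring

/-- Derivative of the geodesic curvature `k = tan(α/2)·sin ω` of the integral
trajectories in the direction of the field `ξ = cos ω ∂_u + (sin ω / sin α) ∂_v`:
if `α' u = 1 - (a+1)/cos (α u)` then
`ξ(k) = ((a+1) cos ω sin ω / (2 cos²(α/2))) (1 - 1/cos α)`. -/
theorem xi_derivative_of_geodesic_curvature
    (a ω₀ : ℝ) (α : ℝ → ℝ) (hα : Differentiable ℝ α)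
    (u v : ℝ)
    (hcos : Real.cos (α u) ≠ 0)
    (hsin : Real.sin (α u) ≠ 0)
    (hcos2 : Real.cos (α u / 2) ≠ 0)
    (hode : deriv α u = 1 - (a + 1) / Real.cos (α u)) :
    Real.cos (a * v + ω₀) *
        deriv (fun u' => Real.tan (α u' / 2) * Real.sin (a * v + ω₀)) u +
      (Real.sin (a * v + ω₀) / Real.sin (α u)) *
        deriv (fun v' => Real.tan (α u / 2) * Real.sin (a * v' + ω₀)) v =
      ((a + 1) * Real.cos (a * v + ω₀) * Real.sin (a * v + ω₀) /
          (2 * Real.cos (α u / 2) ^ 2)) * (1 - 1 / Real.cos (α u)) := by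
  have hω : HasDerivAt (fun v' => a * v' + ω₀) a v := (hasDerivAt_const_mul a).add_const ω₀
  rw [xi_derivative_of_geodesic_curvature_general (hα u).hasDerivAt hω hsin, hode]
  ring
end
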